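/- Let c, k, m, n be positive integers with c + 1 ≤ k ≤ m and n ≤ m^{c-1+1/k} / (4 k^{c+1}). In the random bipartite graph in which each of n left vertices independently receives a uniformly random c-element subset of an m-element right vertex set as its neighborhood, with probability at least 1/4 the resulting graph simultaneously satisfies: (a) every right vertex has degree in [nc/m − √((n/2)·ln(4m)), nc/m + √((n/2)·ln(4m))]; and (b) every subset S of left vertices with 1 ≤ |S| ≤ k satisfies |Γ(S)| ≥ |S|. (Note that for |S| ≤ c condition (b) holds automatically since each left vertex has c distinct neighbors, so the only possible violations are for c+1 ≤ |S| ≤ k.) -/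

import Mathlib

attribute [local instance] Classical.propDecidable

lemma aux_mgf {α : Type} [Fintype α] [Nonempty α] (f : α → ℝ) (hf : ∀ a, f a ∈ Set.Icc (0:ℝ) 1)
    (p : ℝ) (hp : ∑ a, f a = (Fintype.card α : ℝ) * p) (t : ℝ) :
    ∑ a, Real.exp (t * (f a - p)) ≤ (Fintype.card α : ℝ) * Real.exp (t ^ 2 / 8) := by
  letI : MeasurableSpace α := ⊤
  haveI : MeasurableSingletonClass α := ⟨fun _ => trivial⟩
  have hN : (0:ℝ) < Fintype.card α := by exact_mod_cast Fintype.card_pos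
  let μ := (PMF.uniformOfFintype α).toMeasure
  have hint : ∀ g : α → ℝ, ∫ a, g a ∂μ = (Fintype.card α : ℝ)⁻¹ * ∑ a, g a := by
    intro g
    rw [PMF.integral_eq_sum, Finset.mul_sum]
    refine Finset.sum_congr rfl fun a _ => ?_
    simp [PMF.uniformOfFintype_apply]
  have h := (ProbabilityTheory.hasSubgaussianMGF_of_mem_Icc (μ := μ) (X := f) (a := 0) (b := 1)
    (measurable_from_top.aemeasurable) (Filter.Eventually.of_forall hf)).mgf_le t
  rw [ProbabilityTheory.mgf, hint, hint, hp, inv_mul_cancel_left₀ hN.ne'] at h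
  rw [inv_mul_le_iff₀ hN] at h
  refine h.trans (le_of_eq ?_)
  congr 2
  simp
  ring

lemma aux_tail {α : Type} [Fintype α] [Nonempty α] (f : α → ℝ) (hf : ∀ a, f a ∈ Set.Icc (0:ℝ) 1)
    (p : ℝ) (hp : ∑ a, f a = (Fintype.card α : ℝ) * p) (n : ℕ) (hn : 0 < n) (ε : ℝ) (hε : 0 ≤ ε) :
    ((Finset.univ.filter fun ω : Fin n → α => (n:ℝ) * p + ε < ∑ i, f (ω i)).card : ℝ)
      ≤ (Fintype.card α : ℝ) ^ n * Real.exp (- (2 * ε ^ 2 / n)) := by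
  have hn' : (0:ℝ) < n := by exact_mod_cast hn
  set t : ℝ := 4 * ε / n with ht
  have ht0 : 0 ≤ t := by positivity
  have h1 : ((Finset.univ.filter fun ω : Fin n → α => (n:ℝ) * p + ε < ∑ i, f (ω i)).card : ℝ)
      * Real.exp (t * ε) ≤ ∑ ω : Fin n → α, ∏ i, Real.exp (t * (f (ω i) - p)) := by
    rw [← nsmul_eq_mul]
    refine (Finset.card_nsmul_le_sum _ (fun ω : Fin n → α => ∏ i, Real.exp (t * (f (ω i) - p))) _ ?_).trans ?_
    · intro ω hω
      rw [Finset.mem_filter] at hω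
      rw [← Real.exp_sum, Real.exp_le_exp, ← Finset.mul_sum, Finset.sum_sub_distrib]
      apply mul_le_mul_of_nonneg_left _ ht0
      simp
      linarith [hω.2]
    · apply Finset.sum_le_sum_of_subset_of_nonneg (Finset.filter_subset _ _)
      intros; positivity
  rw [← Fintype.sum_pow (fun a => Real.exp (t * (f a - p)))] at h1
  have h2 : (∑ a, Real.exp (t * (f a - p))) ^ n ≤
      ((Fintype.card α : ℝ) * Real.exp (t ^ 2 / 8)) ^ n :=
    pow_le_pow_left₀ (by positivity) (aux_mgf f hf p hp t) n
  rw [mul_pow, ← Real.exp_nat_mul] at h2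
  have h3 := h1.trans h2
  rw [← le_div_iff₀ (Real.exp_pos _), mul_div_assoc, ← Real.exp_sub] at h3
  refine h3.trans (le_of_eq ?_)
  congr 2
  rw [ht]
  field_simp
  ring

lemma aux_choose (t m c : ℕ) (h : t ≤ m) : t.choose c * m ^ c ≤ m.choose c * t ^ c := by
  have key : t.descFactorial c * m ^ c ≤ m.descFactorial c * t ^ c := by
    induction c with
    | zero => simp
    | succ c ih =>
      rw [Nat.descFactorial_succ, Nat.descFactorial_succ, pow_succ, pow_succ]
      have h2 : (t - c) * m ≤ (m - c) * t := by
        rw [Nat.sub_mul, Nat.sub_mul, mul_comm m t]; gcongr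
      calc (t - c) * t.descFactorial c * (m ^ c * m)
          = ((t - c) * m) * (t.descFactorial c * m ^ c) := by ring
        _ ≤ ((m - c) * t) * (m.descFactorial c * t ^ c) := Nat.mul_le_mul h2 ih
        _ = _ := by ring
  rw [Nat.descFactorial_eq_factorial_mul_choose, Nat.descFactorial_eq_factorial_mul_choose,
    mul_assoc, mul_assoc] at key
  exact Nat.le_of_mul_le_mul_left key (Nat.factorial_pos c)

lemma aux_subset_card (m c : ℕ) (T : Finset (Fin m)) :
    (Finset.univ.filter fun C : {C : Finset (Fin m) // C.card = c} => (C : Finset (Fin m)) ⊆ T).card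
      = T.card.choose c := by
  rw [← Finset.card_powersetCard]
  refine Finset.card_bij (fun C _ => (C : Finset (Fin m))) ?_ ?_ ?_
  · intro C hC
    rw [Finset.mem_filter] at hC
    exact Finset.mem_powersetCard.2 ⟨hC.2, C.2⟩
  · intro a _ b _ h
    exact Subtype.ext h
  · intro b hb
    rw [Finset.mem_powersetCard] at hb
    exact ⟨⟨b, hb.2⟩, by simpa using hb.1, rfl⟩

lemma aux_card (m c : ℕ) : Fintype.card {C : Finset (Fin m) // C.card = c} = m.choose c := by
  simp [Fintype.card_finset_len]

lemma aux_mean (m c : ℕ) (hcm : c ≤ m) (v : Fin m) :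
    ∑ C : {C : Finset (Fin m) // C.card = c}, (if v ∈ (C : Finset (Fin m)) then (1:ℝ) else 0)
      = (Fintype.card {C : Finset (Fin m) // C.card = c} : ℝ) * ((c:ℝ) / m) := by
  rw [aux_card, Finset.sum_boole]
  have h1 := aux_subset_card m c (Finset.univ.erase v)
  rw [Finset.card_erase_of_mem (Finset.mem_univ _), Finset.card_univ, Fintype.card_fin] at h1
  have h2 := Finset.card_filter_add_card_filter_not
    (s := (Finset.univ : Finset {C : Finset (Fin m) // C.card = c})) (fun C => v ∈ (C : Finset (Fin m)))
  rw [Finset.card_univ, aux_card] at h2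
  have h3 : (Finset.univ.filter fun C : {C : Finset (Fin m) // C.card = c} =>
      ¬ v ∈ (C : Finset (Fin m))).card = (m-1).choose c := by
    rw [← h1]
    congr 1
    ext C
    simp [Finset.subset_erase]
  rw [h3] at h2
  obtain ⟨m, rfl⟩ : ∃ m', m = m' + 1 := ⟨m - 1, by have := v.2; omega⟩
  have h4 := Nat.choose_mul_succ_eq m c
  rw [Nat.add_sub_cancel] at h2
  have h2' := congrArg (Nat.cast (R := ℝ)) h2
  have h4' := congrArg (Nat.cast (R := ℝ)) h4
  rw [Nat.cast_mul, Nat.cast_mul, Nat.cast_sub hcm] at h4'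
  push_cast at h2' h4' ⊢
  have : (m:ℝ) + 1 ≠ 0 := by positivity
  field_simp
  linear_combination (m + 1 : ℝ) * h2' - h4'

lemma aux_geom (k : ℕ) (hk : 1 ≤ k) : ∑ s ∈ Finset.Icc 2 k, ((1:ℝ)/4) ^ s ≤ 1/4 - (1/4) ^ k := by
  induction k, hk using Nat.le_induction with
  | base => simp
  | succ k hk ih =>
    rw [Finset.sum_Icc_succ_top (by omega)]
    have : (0:ℝ) < (1/4)^k := by positivity
    rw [pow_succ]
    linarith

lemma aux_term (c k m n s : ℕ) (hc : 0 < c) (hck : c + 1 ≤ k) (hkm : k ≤ m)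
    (hnm : (n : ℝ) ≤ (m : ℝ) ^ ((c : ℝ) - 1 + 1 / (k : ℝ)) / (4 * (k : ℝ) ^ (c + 1)))
    (hs : 2 ≤ s) (hsk : s ≤ k) (hsn : s ≤ n) :
    (n.choose s : ℝ) * ((m.choose (s-1)) * ((s-1).choose c ^ s * (m.choose c) ^ (n - s))) ≤
      (m.choose c : ℝ) ^ n * (1/4) ^ s := by
  have hm : (0:ℝ) < m := by exact_mod_cast (by omega : 0 < m)
  have hm1 : (1:ℝ) ≤ m := by exact_mod_cast (by omega : 1 ≤ m)
  have hk : (0:ℝ) < k := by exact_mod_cast (by omega : 0 < k)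
  have hk1 : (1:ℝ) ≤ k := by exact_mod_cast (by omega : 1 ≤ k)
  set x : ℝ := (m:ℝ) ^ (1 / (k:ℝ)) with hx
  have hx1 : 1 ≤ x := Real.one_le_rpow hm1 (by positivity)
  have hxk : x ^ k = m := by
    rw [hx, one_div, Real.rpow_inv_natCast_pow hm.le (by omega)]
  have hxs : x ^ s ≤ m := hxk ▸ pow_le_pow_right₀ hx1 hsk
  have h1 : (m : ℝ) ^ ((c : ℝ) - 1 + 1 / (k : ℝ)) = m ^ c / m * x := by
    rw [Real.rpow_add hm, Real.rpow_sub hm, Real.rpow_natCast, Real.rpow_one]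
  rw [h1] at hnm
  have h2 : (n:ℝ) * k ^ c ≤ m ^ c * (x / (4 * m)) := by
    rw [le_div_iff₀ (by positivity)] at hnm
    have : (n:ℝ) * k ^ c ≤ n * k ^ (c+1) := by
      gcongr
      omega
    have e : (m:ℝ) ^ c * (x / (4 * m)) = (m ^ c / m * x) / 4 := by field_simp
    rw [e]
    linarith
  have h3 : ((s-1).choose c : ℝ) * m ^ c ≤ m.choose c * k ^ c := by
    have := aux_choose (s-1) m c (by omega)
    have h' : (s-1)^c ≤ k^c := Nat.pow_le_pow_left (by omega) c
    have := this.trans (Nat.mul_le_mul_left _ h')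
    exact_mod_cast this
  have h4 : (n:ℝ) * (s-1).choose c ≤ m.choose c * (x / (4 * m)) := by
    have hmc : (0:ℝ) < m ^ c := by positivity
    refine le_of_mul_le_mul_right ?_ hmc
    calc (n:ℝ) * (s-1).choose c * m ^ c = n * ((s-1).choose c * m ^ c) := by ring
      _ ≤ n * (m.choose c * k ^ c) := by gcongr
      _ = m.choose c * (n * k ^ c) := by ring
      _ ≤ m.choose c * (m ^ c * (x / (4 * m))) := by gcongr
      _ = _ := by ring
  have h5 : (n.choose s : ℝ) ≤ n ^ s := by exact_mod_cast Nat.choose_le_pow n s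
  have h6 : (m.choose (s-1) : ℝ) ≤ m ^ (s-1) := by exact_mod_cast Nat.choose_le_pow m (s-1)
  calc (n.choose s : ℝ) * ((m.choose (s-1)) * ((s-1).choose c ^ s * (m.choose c) ^ (n - s)))
      ≤ n ^ s * (m ^ (s-1) * ((s-1).choose c ^ s * (m.choose c) ^ (n - s))) := by gcongr
    _ = (n * (s-1).choose c) ^ s * (m ^ (s-1) * (m.choose c) ^ (n - s)) := by rw [mul_pow]; ring
    _ ≤ (m.choose c * (x / (4 * m))) ^ s * (m ^ (s-1) * (m.choose c) ^ (n - s)) := by gcongr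
    _ = ((m.choose c) ^ s * (m.choose c) ^ (n - s)) * (x ^ s * (m ^ (s-1) / m ^ s)) * (1/4) ^ s := by
        rw [mul_pow, div_pow, mul_pow, div_pow, one_pow]; field_simp
    _ = (m.choose c) ^ n * (x ^ s / m) * (1/4) ^ s := by
        rw [← pow_add, Nat.add_sub_cancel' hsn]
        congr 2
        obtain ⟨r, rfl⟩ : ∃ r, s = r + 1 := ⟨s - 1, by omega⟩
        rw [Nat.add_sub_cancel, pow_succ (m:ℝ)]
        field_simp
    _ ≤ (m.choose c) ^ n * 1 * (1/4) ^ s := by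
        gcongr
        rw [div_le_one hm]; exact hxs
    _ = _ := by ring

lemma aux_A (m c n : ℕ) (S : Finset (Fin n)) (T : Finset (Fin m)) :
    (Finset.univ.filter fun ω : Fin n → {C : Finset (Fin m) // C.card = c} =>
      ∀ u ∈ S, (ω u : Finset (Fin m)) ⊆ T).card
      = T.card.choose c ^ S.card * (m.choose c) ^ (n - S.card) := by
  have : (Finset.univ.filter fun ω : Fin n → {C : Finset (Fin m) // C.card = c} =>
      ∀ u ∈ S, (ω u : Finset (Fin m)) ⊆ T) = Fintype.piFinset fun u : Fin n =>
        if u ∈ S then (Finset.univ.filter fun C : {C : Finset (Fin m) // C.card = c} =>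
          (C : Finset (Fin m)) ⊆ T) else Finset.univ := by
    ext ω
    simp only [Finset.mem_filter, Finset.mem_univ, true_and, Fintype.mem_piFinset]
    refine forall_congr' fun u => ?_
    split_ifs with h <;> simp [h]
  rw [this, Fintype.card_piFinset]
  have : ∀ u : Fin n, (if u ∈ S then (Finset.univ.filter fun C : {C : Finset (Fin m) // C.card = c} =>
          (C : Finset (Fin m)) ⊆ T) else Finset.univ).card =
      if u ∈ S then T.card.choose c else m.choose c := by
    intro u
    split_ifs
    · exact aux_subset_card m c T
    · rw [Finset.card_univ, aux_card]
  simp_rw [this]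
  rw [Finset.prod_ite, Finset.prod_const, Finset.prod_const]
  congr 2
  · simp
  · rw [Finset.filter_not, Finset.card_sdiff]
    simp

lemma aux_b (c k m n : ℕ) (hc : 0 < c) (hck : c + 1 ≤ k) (hkm : k ≤ m)
    (hnm : (n : ℝ) ≤ (m : ℝ) ^ ((c : ℝ) - 1 + 1 / (k : ℝ)) / (4 * (k : ℝ) ^ (c + 1))) :
    ((Finset.univ.filter fun ω : Fin n → {C : Finset (Fin m) // C.card = c} =>
      ¬ (∀ S : Finset (Fin n), 1 ≤ S.card → S.card ≤ k →
            S.card ≤ (S.biUnion fun u => (ω u : Finset (Fin m))).card)).card : ℝ) ≤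
      (m.choose c : ℝ) ^ n * (1/4) := by
  have hsub : (Finset.univ.filter fun ω : Fin n → {C : Finset (Fin m) // C.card = c} =>
      ¬ (∀ S : Finset (Fin n), 1 ≤ S.card → S.card ≤ k →
            S.card ≤ (S.biUnion fun u => (ω u : Finset (Fin m))).card)) ⊆
      (Finset.Icc 2 k).biUnion fun s => (Finset.powersetCard s Finset.univ).biUnion fun S =>
        (Finset.powersetCard (s-1) Finset.univ).biUnion fun T =>
        (Finset.univ.filter fun ω : Fin n → {C : Finset (Fin m) // C.card = c} =>
          ∀ u ∈ S, (ω u : Finset (Fin m)) ⊆ T) := by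
    intro ω hω
    rw [Finset.mem_filter] at hω
    have h := hω.2
    push Not at h
    obtain ⟨S, hS1, hSk, hS⟩ := h
    have hS2 : 2 ≤ S.card := by
      obtain ⟨u, hu⟩ := Finset.card_pos.1 hS1
      have h1 := Finset.card_le_card
        (Finset.subset_biUnion_of_mem (fun u => (ω u : Finset (Fin m))) hu)
      have h2 := (ω u).2
      omega
    obtain ⟨T, hT, hTc⟩ := Finset.exists_superset_card_eq (n := S.card - 1)
      (s := S.biUnion fun u => (ω u : Finset (Fin m))) (by omega) (by simp; omega)
    simp only [Finset.mem_biUnion, Finset.mem_Icc, Finset.mem_powersetCard, Finset.mem_filter,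
      Finset.mem_univ, true_and]
    refine ⟨S.card, ⟨hS2, hSk⟩, S, ⟨Finset.subset_univ _, rfl⟩, T, ⟨Finset.subset_univ _, hTc⟩, ?_⟩
    intro u hu
    exact (Finset.subset_biUnion_of_mem (fun u => (ω u : Finset (Fin m))) hu).trans hT
  have h1 := (Finset.card_le_card hsub).trans Finset.card_biUnion_le
  have h2 : ∀ s ∈ Finset.Icc 2 k, ((((Finset.powersetCard s Finset.univ).biUnion fun S =>
        (Finset.powersetCard (s-1) Finset.univ).biUnion fun T =>
        (Finset.univ.filter fun ω : Fin n → {C : Finset (Fin m) // C.card = c} =>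
          ∀ u ∈ S, (ω u : Finset (Fin m)) ⊆ T)).card : ℕ) : ℝ) ≤ (m.choose c : ℝ) ^ n * (1/4) ^ s := by
    intro s hs
    rw [Finset.mem_Icc] at hs
    have h3 : ((Finset.powersetCard s Finset.univ).biUnion fun S =>
        (Finset.powersetCard (s-1) Finset.univ).biUnion fun T =>
        (Finset.univ.filter fun ω : Fin n → {C : Finset (Fin m) // C.card = c} =>
          ∀ u ∈ S, (ω u : Finset (Fin m)) ⊆ T)).card ≤
        n.choose s * (m.choose (s-1) * ((s-1).choose c ^ s * (m.choose c) ^ (n - s))) := by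
      refine (Finset.card_biUnion_le_card_mul _ _
        (m.choose (s-1) * ((s-1).choose c ^ s * (m.choose c) ^ (n - s))) ?_).trans ?_
      · intro S hS
        rw [Finset.mem_powersetCard] at hS
        refine (Finset.card_biUnion_le_card_mul _ _
          ((s-1).choose c ^ s * (m.choose c) ^ (n - s)) ?_).trans ?_
        · intro T hT
          rw [Finset.mem_powersetCard] at hT
          rw [aux_A, hS.2, hT.2]
        · simp [Finset.card_powersetCard]
      · simp [Finset.card_powersetCard]
    by_cases hsn : s ≤ n
    · refine le_trans ?_ (aux_term c k m n s hc hck hkm hnm hs.1 hs.2 hsn)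
      exact_mod_cast h3
    · rw [Nat.choose_eq_zero_of_lt (by omega), zero_mul] at h3
      have h4 := Nat.le_zero.1 h3
      rw [h4]
      simp only [Nat.cast_zero]
      positivity
  have h3 := Finset.sum_le_sum h2
  rw [← Finset.mul_sum] at h3
  have h4 := aux_geom k (by omega)
  have h5 : (0:ℝ) < (1/4)^k := by positivity
  have h1' := (Nat.cast_le (α := ℝ)).2 h1
  rw [Nat.cast_sum] at h1'
  refine h1'.trans (h3.trans ?_)
  gcongr
  linarith

lemma aux_a (c m n : ℕ) (hn : 0 < n) (hcm : c ≤ m) (hm : 0 < m) (v : Fin m) :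
    ((Finset.univ.filter fun ω : Fin n → {C : Finset (Fin m) // C.card = c} =>
      ¬ ((n : ℝ) * c / m - Real.sqrt ((n : ℝ) / 2 * Real.log (4 * m)) ≤
              ((Finset.univ.filter fun u : Fin n => v ∈ (ω u : Finset (Fin m))).card : ℝ) ∧
            ((Finset.univ.filter fun u : Fin n => v ∈ (ω u : Finset (Fin m))).card : ℝ) ≤
              (n : ℝ) * c / m + Real.sqrt ((n : ℝ) / 2 * Real.log (4 * m)))).card : ℝ) ≤
      (m.choose c : ℝ) ^ n * (1/(2 * m)) := by
  haveI : Nonempty {C : Finset (Fin m) // C.card = c} := by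
    rw [← Fintype.card_pos_iff, aux_card]
    exact Nat.choose_pos hcm
  have hm' : (1:ℝ) ≤ m := by exact_mod_cast hm
  have hn' : (0:ℝ) < n := by exact_mod_cast hn
  have hm0 : (0:ℝ) < m := by linarith
  set ε := Real.sqrt ((n : ℝ) / 2 * Real.log (4 * m)) with hε
  have hlog : 0 ≤ Real.log (4 * m) := Real.log_nonneg (by linarith)
  have hε2 : ε ^ 2 = (n : ℝ) / 2 * Real.log (4 * m) := Real.sq_sqrt (by positivity)
  have hexp : Real.exp (- (2 * ε ^ 2 / n)) = 1 / (4 * m) := by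
    have : 2 * ε ^ 2 / n = Real.log (4 * m) := by rw [hε2]; field_simp
    rw [this, Real.exp_neg, Real.exp_log (by positivity), one_div]
  have hmean := aux_mean m c hcm v
  have h1 := aux_tail (fun C : {C : Finset (Fin m) // C.card = c} =>
    if v ∈ (C : Finset (Fin m)) then (1:ℝ) else 0) (by intro a; split_ifs <;> simp) (c / m)
    hmean n hn ε (Real.sqrt_nonneg _)
  have h2 := aux_tail (fun C : {C : Finset (Fin m) // C.card = c} =>
    1 - if v ∈ (C : Finset (Fin m)) then (1:ℝ) else 0) (by intro a; split_ifs <;> simp)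
    (1 - c / m) (by rw [Finset.sum_sub_distrib, hmean]; simp; ring) n hn ε (Real.sqrt_nonneg _)
  rw [hexp, aux_card] at h1 h2
  have hsub : (Finset.univ.filter fun ω : Fin n → {C : Finset (Fin m) // C.card = c} =>
      ¬ ((n : ℝ) * c / m - ε ≤
              ((Finset.univ.filter fun u : Fin n => v ∈ (ω u : Finset (Fin m))).card : ℝ) ∧
            ((Finset.univ.filter fun u : Fin n => v ∈ (ω u : Finset (Fin m))).card : ℝ) ≤
              (n : ℝ) * c / m + ε)) ⊆
      (Finset.univ.filter fun ω : Fin n → {C : Finset (Fin m) // C.card = c} =>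
        (n:ℝ) * (c / m) + ε < ∑ i, if v ∈ (ω i : Finset (Fin m)) then (1:ℝ) else 0) ∪
      (Finset.univ.filter fun ω : Fin n → {C : Finset (Fin m) // C.card = c} =>
        (n:ℝ) * (1 - c / m) + ε < ∑ i, (1 - if v ∈ (ω i : Finset (Fin m)) then (1:ℝ) else 0)) := by
    intro ω hω
    rw [Finset.mem_filter] at hω
    have h := hω.2
    rw [Finset.mem_union, Finset.mem_filter, Finset.mem_filter, Finset.sum_sub_distrib,
      Finset.sum_boole]
    simp only [Finset.mem_univ, true_and, Finset.sum_const, Finset.card_univ, Fintype.card_fin,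
      nsmul_eq_mul, mul_one]
    rw [mul_div_assoc] at h
    by_contra hcon
    push Not at hcon
    apply h
    constructor
    · linarith [hcon.2]
    · linarith [hcon.1]
  have h3 := (Nat.cast_le (α := ℝ)).2 ((Finset.card_le_card hsub).trans (Finset.card_union_le _ _))
  rw [Nat.cast_add] at h3
  have h4 : (m.choose c : ℝ) ^ n * (1/(2 * m)) =
    (m.choose c : ℝ) ^ n * (1/(4 * m)) + (m.choose c : ℝ) ^ n * (1/(4 * m)) := by
    field_simp; ring
  rw [h4]
  exact h3.trans (add_le_add h1 h2)

/-- **The random construction succeeds with probability at least 1/4.**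
With `c + 1 ≤ k ≤ m` and `n ≤ m^(c-1+1/k)/(4k^(c+1))`, in the random bipartite graph
where each of the `n` left vertices independently receives a uniformly random
`c`-element subset of an `m`-element right vertex set as its neighborhood, with
probability at least `1/4` the graph simultaneously satisfies:
(a) every right vertex has degree in `[nc/m − √((n/2)·ln(4m)), nc/m + √((n/2)·ln(4m))]`;
(b) every subset `S` of left vertices with `1 ≤ |S| ≤ k` satisfies `|Γ(S)| ≥ |S|`. -/
theorem stmt_8 (c k m n : ℕ) (hc : 0 < c) (hn : 0 < n) (hck : c + 1 ≤ k) (hkm : k ≤ m)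
    (hnm : (n : ℝ) ≤ (m : ℝ) ^ ((c : ℝ) - 1 + 1 / (k : ℝ)) / (4 * (k : ℝ) ^ (c + 1))) :
    (1 : ℝ) / 4 ≤
      ((Finset.univ.filter fun ω : Fin n → {C : Finset (Fin m) // C.card = c} =>
          (∀ v : Fin m,
            (n : ℝ) * c / m - Real.sqrt ((n : ℝ) / 2 * Real.log (4 * m)) ≤
              ((Finset.univ.filter fun u : Fin n => v ∈ (ω u : Finset (Fin m))).card : ℝ) ∧
            ((Finset.univ.filter fun u : Fin n => v ∈ (ω u : Finset (Fin m))).card : ℝ) ≤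
              (n : ℝ) * c / m + Real.sqrt ((n : ℝ) / 2 * Real.log (4 * m))) ∧
          (∀ S : Finset (Fin n), 1 ≤ S.card → S.card ≤ k →
            S.card ≤ (S.biUnion fun u => (ω u : Finset (Fin m))).card)).card : ℝ) /
        (Fintype.card (Fin n → {C : Finset (Fin m) // C.card = c}) : ℝ) := by
  have hb := aux_b c k m n hc hck hkm hnm
  have ha := aux_a c m n hn (by omega) (by omega)
  have hm : (0:ℝ) < m := by exact_mod_cast (by omega : 0 < m)
  have hN : (0:ℝ) < (m.choose c : ℝ) ^ n := by
    have : 0 < m.choose c := Nat.choose_pos (by omega)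
    positivity
  have hcard : (Fintype.card (Fin n → {C : Finset (Fin m) // C.card = c}) : ℝ)
      = (m.choose c : ℝ) ^ n := by
    rw [Fintype.card_fun, aux_card, Fintype.card_fin]
    push_cast
    rfl
  rw [hcard, le_div_iff₀ hN]
  have hsum := (Finset.sum_le_sum (s := Finset.univ) fun v _ => ha v)
  rw [Finset.sum_const, Finset.card_univ, Fintype.card_fin, nsmul_eq_mul] at hsum
  have he : (m:ℝ) * ((m.choose c : ℝ) ^ n * (1/(2 * m))) = (m.choose c : ℝ) ^ n * (1/2) := by
    field_simp
  rw [he, ← Nat.cast_sum] at hsum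
  have hbi := (Nat.cast_le (α := ℝ)).2 (Finset.card_biUnion_le (s := (Finset.univ : Finset (Fin m)))
    (t := fun v => Finset.univ.filter fun ω : Fin n → {C : Finset (Fin m) // C.card = c} =>
      ¬ ((n : ℝ) * c / m - Real.sqrt ((n : ℝ) / 2 * Real.log (4 * m)) ≤
              ((Finset.univ.filter fun u : Fin n => v ∈ (ω u : Finset (Fin m))).card : ℝ) ∧
            ((Finset.univ.filter fun u : Fin n => v ∈ (ω u : Finset (Fin m))).card : ℝ) ≤
              (n : ℝ) * c / m + Real.sqrt ((n : ℝ) / 2 * Real.log (4 * m)))))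
  have hA := hbi.trans hsum
  set G := (Finset.univ.filter fun ω : Fin n → {C : Finset (Fin m) // C.card = c} =>
          (∀ v : Fin m,
            (n : ℝ) * c / m - Real.sqrt ((n : ℝ) / 2 * Real.log (4 * m)) ≤
              ((Finset.univ.filter fun u : Fin n => v ∈ (ω u : Finset (Fin m))).card : ℝ) ∧
            ((Finset.univ.filter fun u : Fin n => v ∈ (ω u : Finset (Fin m))).card : ℝ) ≤
              (n : ℝ) * c / m + Real.sqrt ((n : ℝ) / 2 * Real.log (4 * m))) ∧
          (∀ S : Finset (Fin n), 1 ≤ S.card → S.card ≤ k →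
            S.card ≤ (S.biUnion fun u => (ω u : Finset (Fin m))).card)) with hG
  set B := (Finset.univ.filter fun ω : Fin n → {C : Finset (Fin m) // C.card = c} =>
      ¬ (∀ S : Finset (Fin n), 1 ≤ S.card → S.card ≤ k →
            S.card ≤ (S.biUnion fun u => (ω u : Finset (Fin m))).card)) with hB
  set A := (Finset.univ : Finset (Fin m)).biUnion
    (fun v => Finset.univ.filter fun ω : Fin n → {C : Finset (Fin m) // C.card = c} =>
      ¬ ((n : ℝ) * c / m - Real.sqrt ((n : ℝ) / 2 * Real.log (4 * m)) ≤
              ((Finset.univ.filter fun u : Fin n => v ∈ (ω u : Finset (Fin m))).card : ℝ) ∧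
            ((Finset.univ.filter fun u : Fin n => v ∈ (ω u : Finset (Fin m))).card : ℝ) ≤
              (n : ℝ) * c / m + Real.sqrt ((n : ℝ) / 2 * Real.log (4 * m)))) with hAdef
  have hcov : (Finset.univ : Finset (Fin n → {C : Finset (Fin m) // C.card = c})) ⊆ G ∪ (A ∪ B) := by
    intro ω _
    rw [Finset.mem_union, Finset.mem_union]
    by_contra hcon
    rw [not_or, not_or] at hcon
    obtain ⟨h1, h2, h3⟩ := hcon
    apply h1
    rw [hG, Finset.mem_filter]
    refine ⟨Finset.mem_univ _, ?_, ?_⟩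
    · intro v
      by_contra hv
      exact h2 (Finset.mem_biUnion.2 ⟨v, Finset.mem_univ _, Finset.mem_filter.2 ⟨Finset.mem_univ _, hv⟩⟩)
    · by_contra hv
      exact h3 (Finset.mem_filter.2 ⟨Finset.mem_univ _, hv⟩)
  have h1 := (Finset.card_le_card hcov).trans
    ((Finset.card_union_le _ _).trans (Nat.add_le_add_left (Finset.card_union_le _ _) _))
  have h2 := (Nat.cast_le (α := ℝ)).2 h1
  rw [Finset.card_univ, hcard] at h2
  push_cast at h2
  linarith
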